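/- arXiv:1103.3515 — 2 statements merged into one kernel-verified Lean document; each statement's English description precedes it below -/
import Mathlib

section
/- Let (M, W, met, mr, ≺) be a routing metric with W nonempty. If the metric is strictly decreasing and has no fixed point, then the set M of metric values is infinite. -/
/-- The data of a routing metric: metric values `M`, edge weights `W`,
a metric function `met`, a maximum value `mr`, and a relation `lt` (the order `≺`). -/
structure MetricSpec (M W : Type) where
  met : M → W → M
  mr : M
  lt : M → M → Prop

namespace MetricSpec

variable {M W : Type}

/-- The utility condition for a metric value `m`: there is a sequence
`m_0 = mr, m_1, …, m_k = m` and weights `w_0, …, w_{k-1}` with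
`m_i = met (m_{i-1}) (w_{i-1})` for all `1 ≤ i ≤ k`. -/
def Reaches (S : MetricSpec M W) (m : M) : Prop :=
  ∃ (k : ℕ) (ms : ℕ → M) (ws : ℕ → W), ms 0 = S.mr ∧ ms k = m ∧
    ∀ i, 1 ≤ i → i ≤ k → ms i = S.met (ms (i - 1)) (ws (i - 1))

/-- `S` is a routing metric: `lt` is an irreflexive, transitive and total (strict) order,
`mr` is the maximum element of `M` w.r.t. `lt`, and every `m ≠ mr` satisfies the
utility condition. -/
def IsRoutingMetric (S : MetricSpec M W) : Prop :=
  (∀ m, ¬ S.lt m m) ∧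
  (∀ a b c, S.lt a b → S.lt b c → S.lt a c) ∧
  (∀ a b, S.lt a b ∨ S.lt b a ∨ a = b) ∧
  (∀ m, m ≠ S.mr → S.lt m S.mr) ∧
  (∀ m, m ≠ S.mr → S.Reaches m)

/-- A metric is bounded if `met m w ≺ m` or `met m w = m` for all `m`, `w`. -/
def Bounded (S : MetricSpec M W) : Prop :=
  ∀ m w, S.lt (S.met m w) m ∨ S.met m w = m

/-- A metric is monotonic if `m ≺ m'` implies `met m w ≺ met m' w` or
`met m w = met m' w`. -/
def Monotonic (S : MetricSpec M W) : Prop :=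
  ∀ m m' w, S.lt m m' → S.lt (S.met m w) (S.met m' w) ∨ S.met m w = S.met m' w

/-- A metric is strictly decreasing if for every `m`, either `met m w ≺ m` for all `w`,
or `met m w = m` for all `w`. -/
def StrictlyDecreasing (S : MetricSpec M W) : Prop :=
  ∀ m, (∀ w, S.lt (S.met m w) m) ∨ (∀ w, S.met m w = m)

/-- A metric value `m` is a fixed point if `met m w = m` for every `w`. -/
def IsFixedPoint (S : MetricSpec M W) (m : M) : Prop :=
  ∀ w, S.met m w = m

/-- A (maximizable) metric is strongly maximizable if `|M| = 1`, or `|M| ≥ 2`,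
the metric is strictly decreasing, and it has one and only one fixed point. -/
def StronglyMaximizable (S : MetricSpec M W) : Prop :=
  (∀ a b : M, a = b) ∨
    ((∃ a b : M, a ≠ b) ∧ S.StrictlyDecreasing ∧ ∃! m, S.IsFixedPoint m)

end MetricSpec

namespace MetricSpec

variable {M W : Type} {S : MetricSpec M W}

theorem IsRoutingMetric.isStrictOrder (hS : S.IsRoutingMetric) : IsStrictOrder M S.lt where
  irrefl := hS.1
  trans := hS.2.1

theorem StrictlyDecreasing.bounded (hdec : S.StrictlyDecreasing) : S.Bounded :=
  fun m w => (hdec m).imp (fun hlt => hlt w) (fun heq => heq w)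

theorem Bounded.isFixedPoint_of_forall_not_lt (hbdd : S.Bounded) {m : M}
    (hmin : ∀ m', ¬ S.lt m' m) : S.IsFixedPoint m :=
  fun w => (hbdd m w).resolve_left (hmin (S.met m w))

theorem Bounded.exists_isFixedPoint_of_wellFounded (hbdd : S.Bounded)
    (hwf : WellFounded S.lt) : ∃ m, S.IsFixedPoint m := by
  obtain ⟨m, -, hmin⟩ := hwf.has_min Set.univ ⟨S.mr, Set.mem_univ S.mr⟩
  exact ⟨m, hbdd.isFixedPoint_of_forall_not_lt fun m' => hmin m' (Set.mem_univ m')⟩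

end MetricSpec

theorem infinite_of_strictlyDecreasing_of_no_fixedPoint_general {M W : Type}
    (S : MetricSpec M W) [IsStrictOrder M S.lt] (hbdd : S.Bounded)
    (hfix : ∀ m, ¬ S.IsFixedPoint m) : Infinite M := by
  by_contra hM
  have : Finite M := not_infinite_iff_finite.mp hM
  obtain ⟨m, hm⟩ := hbdd.exists_isFixedPoint_of_wellFounded
    (Finite.wellFounded_of_trans_of_irrefl S.lt)
  exact hfix m hm

/-- If a routing metric with nonempty weight set is strictly decreasing and has no
fixed point, then the set of metric values is infinite. -/
theorem infinite_of_strictlyDecreasing_of_no_fixedPoint {M W : Type} (S : MetricSpec M W)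
    (hS : S.IsRoutingMetric) (hW : Nonempty W)
    (hdec : S.StrictlyDecreasing) (hfix : ∀ m, ¬ S.IsFixedPoint m) :
    Infinite M := by
  have := hS.isStrictOrder
  exact infinite_of_strictlyDecreasing_of_no_fixedPoint_general S hdec.bounded hfix
end

section
/- Let (M, W, met, mr, ≺) be a bounded routing metric and let m ∈ M \ {mr}. Among all sequences m_0 = mr, m_1, …, m_k = m in M with weights w_0, …, w_{k-1} ∈ W satisfying m_i = met(m_{i-1}, w_{i-1}) for 1 ≤ i ≤ k (such a sequence exists by the utility condition), consider one of minimal length k. Then m_i ≺ m_{i-1} for every 1 ≤ i ≤ k; in particular the values m_0, m_1, …, m_k are pairwise distinct. -/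
/-!
A sequence of minimal length never repeats a value, since a repetition `m_i = m_j` with `i < j`
would allow `m_{i+1}, …, m_j` to be cut out. In particular no step keeps its value, so by
boundedness every step is strictly decreasing.
-/

/-- A utility sequence of length `k` from `a` to `b`: values `a = m_0, m_1, …, m_k = b` and weights
`w_0, …, w_{k-1}` with `m_i = met m_{i-1} w_{i-1}` for `1 ≤ i ≤ k`. Values and weights are given by
functions on all of `ℕ`, whose entries beyond this range are arbitrary. -/
structure IsUtilitySequence {M W : Type*} (met : M → W → M) (a b : M) (k : ℕ)
    (ms : ℕ → M) (ws : ℕ → W) : Prop where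
  init : ms 0 = a
  last : ms k = b
  step : ∀ i, 1 ≤ i → i ≤ k → ms i = met (ms (i - 1)) (ws (i - 1))

namespace IsUtilitySequence

variable {M W : Type*} {met : M → W → M} {a b c : M} {k l i j : ℕ}
  {ms ms' : ℕ → M} {ws ws' : ℕ → W}

theorem take (h : IsUtilitySequence met a b k ms ws) (hi : i ≤ k) :
    IsUtilitySequence met a (ms i) i ms ws :=
  ⟨h.init, rfl, fun n hn hni => h.step n hn (hni.trans hi)⟩

theorem drop (h : IsUtilitySequence met a b k ms ws) (hj : j ≤ k) :
    IsUtilitySequence met (ms j) b (k - j) (fun n => ms (j + n)) (fun n => ws (j + n)) where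
  init := rfl
  last := by rw [Nat.add_sub_cancel' hj, h.last]
  step n hn hnk := by
    rw [← Nat.add_sub_assoc hn]
    exact h.step (j + n) (by omega) (by omega)

theorem exists_append (h : IsUtilitySequence met a b k ms ws)
    (h' : IsUtilitySequence met b c l ms' ws') :
    ∃ ns vs, IsUtilitySequence met a c (k + l) ns vs := by
  refine ⟨fun n => if n < k then ms n else ms' (n - k),
    fun n => if n < k then ws n else ws' (n - k), ?_, ?_, ?_⟩
  · rcases k.eq_zero_or_pos with rfl | hk
    · simpa using h'.init.trans (h.last.symm.trans h.init)
    · simpa [hk] using h.init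
  · simpa using h'.last
  · intro n hn hnkl
    rcases lt_trichotomy n k with hnk | rfl | hkn
    · have hpred : n - 1 < k := by omega
      simpa only [if_pos hnk, if_pos hpred] using h.step n hn hnk.le
    · have hpred : n - 1 < n := by omega
      have hjoin : ms' 0 = ms n := h'.init.trans h.last.symm
      simpa only [lt_irrefl, if_false, if_pos hpred, Nat.sub_self, hjoin] using h.step n hn le_rfl
    · have hpred : ¬ n - 1 < k := by omega
      simpa only [if_neg hkn.not_gt, if_neg hpred, Nat.sub_right_comm n 1 k] using
        h'.step (n - k) (by omega) (by omega)

theorem exists_of_value_eq (h : IsUtilitySequence met a b k ms ws) (hi : i ≤ k) (hj : j ≤ k)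
    (hij : ms i = ms j) : ∃ ns vs, IsUtilitySequence met a b (i + (k - j)) ns vs :=
  (h.take hi).exists_append (hij ▸ h.drop hj)

theorem injOn_of_minimal (h : IsUtilitySequence met a b k ms ws)
    (hmin : ∀ k' ms' ws', IsUtilitySequence met a b k' ms' ws' → k ≤ k') :
    Set.InjOn ms (Set.Iic k) := by
  have le_of_value_eq : ∀ {i j}, i ≤ k → j ≤ k → ms i = ms j → j ≤ i := by
    intro i j hi hj hij
    obtain ⟨ns, vs, hcut⟩ := h.exists_of_value_eq hi hj hij
    have hle : k ≤ i + (k - j) := hmin _ ns vs hcut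
    omega
  exact fun i hi j hj hij =>
    le_antisymm (le_of_value_eq hj hi hij.symm) (le_of_value_eq hi hj hij)

end IsUtilitySequence

theorem minimal_utility_sequence_strictly_decreasing_general {M W : Type*} {met : M → W → M}
    {r : M → M → Prop} (hB : ∀ m w, r (met m w) m ∨ met m w = m) {a b : M} {k : ℕ}
    {ms : ℕ → M} {ws : ℕ → W} (h : IsUtilitySequence met a b k ms ws)
    (hmin : ∀ k' ms' ws', IsUtilitySequence met a b k' ms' ws' → k ≤ k') :
    (∀ i, 1 ≤ i → i ≤ k → r (ms i) (ms (i - 1))) ∧ Set.InjOn ms (Set.Iic k) := by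
  have hinj : Set.InjOn ms (Set.Iic k) := h.injOn_of_minimal hmin
  refine ⟨fun i hi hik => ?_, hinj⟩
  have hne : ms i ≠ ms (i - 1) := fun heq => by
    have hpred : i = i - 1 := hinj hik ((Nat.sub_le i 1).trans hik) heq
    omega
  rw [h.step i hi hik] at hne ⊢
  exact (hB _ _).resolve_right hne

/-- For a bounded routing metric and `m ≠ mr`, any minimal-length sequence
`m_0 = mr, …, m_k = m` with `m_i = met (m_{i-1}) (w_{i-1})` is strictly decreasing
(`m_i ≺ m_{i-1}` for `1 ≤ i ≤ k`); in particular its values are pairwise distinct. -/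
theorem minimal_utility_sequence_strictly_decreasing {M W : Type} (S : MetricSpec M W)
    (hS : S.IsRoutingMetric) (hB : S.Bounded) (m : M) (hm : m ≠ S.mr)
    (k : ℕ) (ms : ℕ → M) (ws : ℕ → W)
    (h0 : ms 0 = S.mr) (hk : ms k = m)
    (hstep : ∀ i, 1 ≤ i → i ≤ k → ms i = S.met (ms (i - 1)) (ws (i - 1)))
    (hmin : ∀ (k' : ℕ) (ms' : ℕ → M) (ws' : ℕ → W), ms' 0 = S.mr → ms' k' = m →
      (∀ i, 1 ≤ i → i ≤ k' → ms' i = S.met (ms' (i - 1)) (ws' (i - 1))) → k ≤ k') :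
    (∀ i, 1 ≤ i → i ≤ k → S.lt (ms i) (ms (i - 1))) ∧
      (∀ i j, i ≤ k → j ≤ k → ms i = ms j → i = j) := by
  obtain ⟨hdec, hinj⟩ := minimal_utility_sequence_strictly_decreasing_general hB ⟨h0, hk, hstep⟩
    fun k' ms' ws' h => hmin k' ms' ws' h.init h.last h.step
  exact ⟨hdec, fun _ _ hi hj hij => hinj hi hj hij⟩
end
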